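/- arXiv:1605.03266 — 2 statements merged into one kernel-verified Lean document; each statement's English description precedes it below -/
import Mathlib

section
/- For every n ≥ 1, the recursively defined outmap s_n has period P(s_n) = 2^n; that is, s_n^[2^n](∅) = ∅ and s_n^[l](∅) ≠ ∅ for all l with 1 ≤ l < 2^n. In particular there exist unique sink orientations of the n-cube whose outmap has period exponential in n. -/
/-- An outmap `s` is the outmap of an orientation of the `n`-cube if for every
vertex `v` and every direction `lam`, the `lam`-edge at `v` is outgoing at `v`
iff it is incoming at the neighbor `v Δ {lam}`. -/
def IsOrientation (n : ℕ) (s : Finset (Fin n) → Finset (Fin n)) : Prop :=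
  ∀ (v : Finset (Fin n)) (lam : Fin n), lam ∈ s v ↔ lam ∉ s (symmDiff v {lam})

/-- An outmap `s` is a unique sink orientation (USO) of the `n`-cube if it is
the outmap of an orientation and every subcube `[u : w]` has a unique sink. -/
def IsUSO (n : ℕ) (s : Finset (Fin n) → Finset (Fin n)) : Prop :=
  IsOrientation n s ∧
    ∀ u w : Finset (Fin n), u ⊆ w →
      ∃! x : Finset (Fin n), u ⊆ x ∧ x ⊆ w ∧ s x ∩ (w \ u) = ∅

/-- The recursion step from dimension n to dimension n+1: on the lower facet
(vertices not containing Fin.last n) use the outmap s together with the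
outgoing new direction Fin.last n; on the upper facet (vertices containing
Fin.last n) all edges point downward, so the outmap is v \ {Fin.last n}. -/
noncomputable def stepOutmap (n : ℕ) (s : Finset (Fin n) → Finset (Fin n)) :
    Finset (Fin (n + 1)) → Finset (Fin (n + 1)) := fun v =>
  if Fin.last n ∈ v then v \ {Fin.last n}
  else
    (s (v.preimage Fin.castSucc (Fin.castSucc_injective n).injOn)).image Fin.castSucc ∪
      {Fin.last n}

/-- The recursively defined family of outmaps s_n: for n = 1 the single edge
points from ∅ to {0}; s_{n+1} is obtained from s_n by the recursion step.
(The value at n = 0 is irrelevant.) -/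
noncomputable def recOutmap : (n : ℕ) → Finset (Fin n) → Finset (Fin n)
  | 0 => fun _ => ∅
  | 1 => fun v => if (0 : Fin 1) ∈ v then ∅ else {0}
  | (n + 2) => stepOutmap (n + 1) (recOutmap (n + 1))

/-- The period of an outmap s: the least l ≥ 1 with s^[l](∅) = ∅. -/
noncomputable def outmapPeriod (n : ℕ) (s : Finset (Fin n) → Finset (Fin n)) : ℕ :=
  sInf {l : ℕ | 1 ≤ l ∧ s^[l] ∅ = ∅}

theorem stepOutmap_low (n : ℕ) (s : Finset (Fin n) → Finset (Fin n)) (v : Finset (Fin n)) :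
    stepOutmap n s (v.image Fin.castSucc) = (s v).image Fin.castSucc ∪ {Fin.last n} := by
  have h1 : Fin.last n ∉ v.image Fin.castSucc := by
    simp [Fin.castSucc_ne_last]
  have h2 : (v.image Fin.castSucc).preimage Fin.castSucc
      (Fin.castSucc_injective n).injOn = v := by
    ext x
    simp
  unfold stepOutmap
  rw [if_neg h1, h2]

theorem stepOutmap_twice (n : ℕ) (s : Finset (Fin n) → Finset (Fin n)) (v : Finset (Fin n)) :
    stepOutmap n s (stepOutmap n s (v.image Fin.castSucc)) = (s v).image Fin.castSucc := by
  rw [stepOutmap_low]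
  have h1 : Fin.last n ∉ (s v).image Fin.castSucc := by
    simp [Fin.castSucc_ne_last]
  unfold stepOutmap
  rw [if_pos (by simp), Finset.union_sdiff_right]
  exact Finset.sdiff_eq_self_of_disjoint (Finset.disjoint_singleton_right.2 h1)

theorem stepOutmap_iterate (n : ℕ) (s : Finset (Fin n) → Finset (Fin n)) (k : ℕ) :
    (stepOutmap n s)^[2 * k] ∅ = (s^[k] ∅).image Fin.castSucc := by
  induction k with
  | zero => simp
  | succ k ih =>
    rw [show 2 * (k + 1) = 2 * k + 1 + 1 by ring, Function.iterate_succ_apply',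
      Function.iterate_succ_apply', ih, stepOutmap_twice, Function.iterate_succ_apply']

theorem recOutmap_aux (m : ℕ) :
    (recOutmap (m + 1))^[2 ^ (m + 1)] ∅ = ∅ ∧
    ∀ l : ℕ, 1 ≤ l → l < 2 ^ (m + 1) → (recOutmap (m + 1))^[l] ∅ ≠ ∅ := by
  induction m with
  | zero =>
    refine ⟨by simp [recOutmap], fun l h1 h2 => ?_⟩
    obtain rfl : l = 1 := by omega
    simp [recOutmap]
  | succ m ih =>
    obtain ⟨ih1, ih2⟩ := ih
    change (stepOutmap (m + 1) (recOutmap (m + 1)))^[2 ^ (m + 1 + 1)] ∅ = ∅ ∧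
      ∀ l : ℕ, 1 ≤ l → l < 2 ^ (m + 1 + 1) →
        (stepOutmap (m + 1) (recOutmap (m + 1)))^[l] ∅ ≠ ∅
    rw [pow_succ' 2 (m + 1)]
    refine ⟨by rw [stepOutmap_iterate, ih1]; simp, fun l h1 h2 => ?_⟩
    obtain ⟨k, rfl | rfl⟩ := Nat.even_or_odd' l
    · rw [stepOutmap_iterate]
      have := ih2 k (by omega) (by omega)
      simpa using this
    · rw [Function.iterate_succ_apply', stepOutmap_iterate, stepOutmap_low]
      exact Finset.ne_empty_of_mem (a := Fin.last (m + 1)) (by simp)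

/-- For every n ≥ 1 the recursively defined outmap s_n has period exactly 2^n:
s_n^[2^n](∅) = ∅ while s_n^[l](∅) ≠ ∅ for all 1 ≤ l < 2^n.  In particular there
are USOs of the n-cube whose outmap has period exponential in n. -/
theorem recOutmap_period_exponential (n : ℕ) (hn : 1 ≤ n) :
    outmapPeriod n (recOutmap n) = 2 ^ n ∧
    (recOutmap n)^[2 ^ n] ∅ = ∅ ∧
    ∀ l : ℕ, 1 ≤ l → l < 2 ^ n → (recOutmap n)^[l] ∅ ≠ ∅ := by
  obtain ⟨m, rfl⟩ : ∃ m, n = m + 1 := ⟨n - 1, by omega⟩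
  obtain ⟨h1, h2⟩ := recOutmap_aux m
  refine ⟨?_, h1, h2⟩
  have hl : IsLeast {l : ℕ | 1 ≤ l ∧ (recOutmap (m + 1))^[l] ∅ = ∅} (2 ^ (m + 1)) := by
    refine ⟨⟨Nat.one_le_two_pow, h1⟩, fun l hl => ?_⟩
    by_contra hlt
    exact h2 l hl.1 (by omega) hl.2
  exact hl.csInf_eq
end

section
/- Let n be a natural number, let s be the outmap of a unique sink orientation (USO) of the n-dimensional hypercube, and suppose there exist natural numbers k and l with l ≥ 1 such that s^[k+l](∅) = s^[k](∅). Then s^[l](∅) = ∅. -/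
theorem sink_iff {n : ℕ} (t u w : Finset (Fin n)) :
    t ∩ (w \ u) = ∅ ↔ ∀ b ∈ w, b ∉ u → b ∉ t := by
  simp only [Finset.eq_empty_iff_forall_notMem, Finset.mem_inter, Finset.mem_sdiff]
  grind

theorem mem_flip {n : ℕ} (t : Finset (Fin n)) (a b : Fin n) :
    b ∈ symmDiff t {a} ↔ (b = a ∧ a ∉ t) ∨ (b ≠ a ∧ b ∈ t) := by
  simp only [Finset.mem_symmDiff, Finset.mem_singleton]
  grind

theorem IsUSO.flip {n : ℕ} {s : Finset (Fin n) → Finset (Fin n)} (hs : IsUSO n s)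
    (a : Fin n) : IsUSO n (fun v => symmDiff (s v) {a}) := by
  obtain ⟨ho, hu⟩ := hs
  simp only [sink_iff] at hu
  refine ⟨?_, ?_⟩
  · intro v b
    have := ho v b
    simp only [mem_flip]
    grind
  · intro u w huw
    simp only [sink_iff, mem_flip]
    by_cases ha : a ∈ w ∧ a ∉ u
    · obtain ⟨haw, hau⟩ := ha
      obtain ⟨x0, ⟨h01, h02, h03⟩, h04⟩ := hu u (w.erase a) (by grind)
      obtain ⟨x1, ⟨h11, h12, h13⟩, h14⟩ := hu (insert a u) w (by grind)
      obtain ⟨y, ⟨hy1, hy2, hy3⟩, hy4⟩ := hu u w huw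
      have hc0 : ∀ x, u ⊆ x → x ⊆ w → a ∉ x → (∀ b ∈ w, b ∉ u → b ≠ a → b ∉ s x) → x = x0 := by
        intro x p q r t
        exact h04 x ⟨p, by grind, by grind⟩
      have hc1 : ∀ x, u ⊆ x → x ⊆ w → a ∈ x → (∀ b ∈ w, b ∉ u → b ≠ a → b ∉ s x) → x = x1 := by
        intro x p q r t
        exact h14 x ⟨by grind, q, by grind⟩
      have a0 : a ∉ x0 := by grind
      have a1 : a ∈ x1 := by grind
      have hne : x0 ≠ x1 := by grind
      have i0 : u ⊆ x0 ∧ x0 ⊆ w ∧ ∀ b ∈ w, b ∉ u → b ≠ a → b ∉ s x0 := ⟨h01, by grind, by grind⟩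
      have i1 : u ⊆ x1 ∧ x1 ⊆ w ∧ ∀ b ∈ w, b ∉ u → b ≠ a → b ∉ s x1 := ⟨by grind, h12, by grind⟩
      have hall : ∀ x, u ⊆ x → x ⊆ w → (∀ b ∈ w, b ∉ u → b ≠ a → b ∉ s x) → x = x0 ∨ x = x1 := by
        intro x p q t
        by_cases hx : a ∈ x
        · exact Or.inr (hc1 x p q hx t)
        · exact Or.inl (hc0 x p q hx t)
      have hy := hall y hy1 hy2 (fun b hb hbu _ => hy3 b hb hbu)
      have hya := hy3 a haw hau
      have e0 : a ∉ s x0 → x0 = y := fun h => hy4 x0 ⟨i0.1, i0.2.1, by grind⟩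
      have e1 : a ∉ s x1 → x1 = y := fun h => hy4 x1 ⟨i1.1, i1.2.1, by grind⟩
      clear hy4 h04 h14 hc0 hc1 hu ho
      rcases hy with hy | hy
      · refine ⟨x1, ⟨i1.1, i1.2.1, by grind⟩, ?_⟩
        rintro x ⟨p, q, r⟩
        rcases hall x p q (by grind) with h | h
        · grind
        · exact h
      · refine ⟨x0, ⟨i0.1, i0.2.1, by grind⟩, ?_⟩
        rintro x ⟨p, q, r⟩
        rcases hall x p q (by grind) with h | h
        · exact h
        · grind
    · obtain ⟨y, ⟨hy1, hy2, hy3⟩, hy4⟩ := hu u w huw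
      refine ⟨y, ⟨hy1, hy2, by grind⟩, ?_⟩
      rintro x ⟨p, q, r⟩
      exact hy4 x ⟨p, q, by grind⟩

theorem IsUSO.flips {n : ℕ} {s : Finset (Fin n) → Finset (Fin n)} (hs : IsUSO n s)
    (L : Finset (Fin n)) : IsUSO n (fun v => symmDiff (s v) L) := by
  induction L using Finset.induction_on with
  | empty =>
    have : (fun v => symmDiff (s v) ∅) = s := by
      funext v
      exact symmDiff_bot (s v)
    rw [this]
    exact hs
  | insert a L ha ih =>
    have h := ih.flip a
    have e : symmDiff L {a} = insert a L := by
      ext b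
      rw [mem_flip]
      grind
    simpa only [symmDiff_assoc, e] using h

theorem IsUSO.injective {n : ℕ} {s : Finset (Fin n) → Finset (Fin n)} (hs : IsUSO n s) :
    Function.Injective s := by
  intro x y hxy
  obtain ⟨z, -, hz⟩ := (hs.flips (s x)).2 ∅ Finset.univ (Finset.empty_subset _)
  have h1 := hz x ⟨Finset.empty_subset _, Finset.subset_univ _, by simp⟩
  have h2 := hz y ⟨Finset.empty_subset _, Finset.subset_univ _, by simp [hxy]⟩
  rw [h1, h2]

/-- If the iterate sequence of a USO outmap starting at ∅ repeats after l more
steps, then already s^[l](∅) = ∅. -/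
theorem uso_iterate_repeat_of_empty (n : ℕ)
    (s : Finset (Fin n) → Finset (Fin n)) (hs : IsUSO n s)
    (k l : ℕ) (hl : 1 ≤ l) (h : s^[k + l] ∅ = s^[k] ∅) :
    s^[l] ∅ = ∅ := by
  rw [Function.iterate_add_apply] at h
  exact hs.injective.iterate k h
end
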